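/- arXiv:2504.09579 — 2 statements merged into one kernel-verified Lean document; each statement's English description precedes it below -/
import Mathlib

section
/- Let t ≥ 3, let p_1 < p_2 < ... < p_t be odd primes, and let α_1, α_2, ..., α_t ≥ 1 be integers. Let S be a set of residues modulo p_1·p_2·...·p_t of cardinality at least 2^t. Then there exist integers a_{(i_1,...,i_t)}, one for each t-tuple (i_1,...,i_t) with 1 ≤ i_k ≤ α_k for all 1 ≤ k ≤ t, such that the set of congruences { a_{(i_1,...,i_t)} (mod p_1^{i_1} · p_2^{i_2} · ... · p_t^{i_t}) } over all such tuples is good, and each a_{(i_1,...,i_t)} is congruent modulo p_1·p_2·...·p_t to an element of S. -/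
/-- A congruence is a pair `(a, d)` representing `a (mod d)`, with residue `a : ℤ`
and modulus `d : ℕ`. Two congruences overlap if some integer satisfies both. -/
def Overlap (c₁ c₂ : ℤ × ℕ) : Prop :=
  ∃ x : ℤ, x ≡ c₁.1 [ZMOD (c₁.2 : ℤ)] ∧ x ≡ c₂.1 [ZMOD (c₂.2 : ℤ)]

/-- A set of congruences is good if any two distinct overlapping congruences in it
have coprime moduli. -/
def IsGood (A : Set (ℤ × ℕ)) : Prop :=
  ∀ c₁ ∈ A, ∀ c₂ ∈ A, c₁ ≠ c₂ → Overlap c₁ c₂ → Nat.Coprime c₁.2 c₂.2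

/-- A positive integer `n` is nice if there is a choice of residues `a d` for each
divisor `d > 1` of `n` such that `{a_d (mod d) : d ∣ n, d > 1}` is good. -/
def IsNice (n : ℕ) : Prop :=
  ∃ a : ℕ → ℤ, IsGood {c : ℤ × ℕ | ∃ d : ℕ, d ∣ n ∧ 1 < d ∧ c = (a d, d)}

/-!
Let the moduli be `∏ k, q k ^ v k`, and attach to each exponent vector `v` the set `U` of indices
`k` with `v k ≥ 2`. There are at most `2 ^ t` sets `U`, so distinct ones can be given distinct
residues `s U` in `S`; congruences with different `U` are then already disjoint modulo `∏ k, q k`.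
For a given `U`, perturb `s U` to `s U + q k ^ (v k - 1)` modulo `q k ^ v k` for each `k ∈ U`, which
does not change it modulo `q k`. If `v` and `w` have the same `U` and `v k < w k`, then `k ∈ U`, and
modulo `q k ^ v k` the perturbation of `v` is nonzero while that of `w` vanishes, so again the
congruences are disjoint.
-/

open scoped Function

theorem IsGood.mono {A B : Set (ℤ × ℕ)} (hB : IsGood B) (hAB : A ⊆ B) : IsGood A :=
  fun c₁ h₁ c₂ h₂ ↦ hB c₁ (hAB h₁) c₂ (hAB h₂)

theorem Overlap.symm {c₁ c₂ : ℤ × ℕ} (h : Overlap c₁ c₂) : Overlap c₂ c₁ :=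
  h.imp fun _ ↦ And.symm

theorem Overlap.modEq_of_dvd {a b : ℤ} {m n d : ℕ} (h : Overlap (a, m) (b, n))
    (hm : d ∣ m) (hn : d ∣ n) : a ≡ b [ZMOD d] := by
  obtain ⟨x, hxa, hxb⟩ := h
  exact (hxa.of_dvd (mod_cast hm)).symm.trans (hxb.of_dvd (mod_cast hn))

theorem pow_not_modEq_pow_of_lt {q : ℤ} (hq₀ : q ≠ 0) (hq : ¬IsUnit q) {m n : ℕ} (hmn : m < n) :
    ¬q ^ m ≡ q ^ n [ZMOD q ^ (m + 1)] := by
  intro h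
  have hdvd : q ^ (m + 1) ∣ q ^ m := h.dvd_iff.mpr (pow_dvd_pow q hmn)
  exact m.lt_irrefl ((pow_dvd_pow_iff hq₀ hq).mp hdvd)

theorem exists_forall_modEq_of_pairwise_coprime {ι : Type*} [Finite ι] {m : ι → ℕ}
    (hm : Pairwise (Nat.Coprime on m)) (r : ι → ℤ) : ∃ a : ℤ, ∀ k, a ≡ r k [ZMOD m k] := by
  have hcoprime : Pairwise (IsCoprime on fun k ↦ Ideal.span {(m k : ℤ)}) := fun _ _ hij ↦
    (Ideal.isCoprime_span_singleton_iff _ _).mpr (hm hij).isCoprime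
  obtain ⟨a, ha⟩ := Ideal.exists_forall_sub_mem_ideal hcoprime r
  exact ⟨a, fun k ↦ (Int.modEq_iff_dvd.mpr (Ideal.mem_span_singleton.mp (ha k))).symm⟩

theorem modEq_prod_of_pairwise_coprime {ι : Type*} [Fintype ι] {m : ι → ℕ}
    (hm : Pairwise (Nat.Coprime on m)) {a b : ℤ} (h : ∀ k, a ≡ b [ZMOD m k]) :
    a ≡ b [ZMOD (∏ k, m k : ℕ)] := by
  rw [Int.modEq_iff_dvd, Nat.cast_prod]
  exact Fintype.prod_dvd_of_coprime (fun _ _ hij ↦ (hm hij).isCoprime) fun k ↦ (h k).dvd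

theorem exists_intCast_mem_and_injective {ι : Type*} [Fintype ι] {n : ℕ} (S : Finset (ZMod n))
    (hS : Fintype.card ι ≤ S.card) :
    ∃ s : ι → ℤ, (∀ i, (s i : ZMod n) ∈ S) ∧ Function.Injective fun i ↦ (s i : ZMod n) := by
  obtain ⟨f⟩ : Nonempty (ι ↪ S) :=
    Function.Embedding.nonempty_of_card_le (by rwa [Fintype.card_coe])
  choose s hs using fun i ↦ ZMod.intCast_surjective (f i : ZMod n)
  refine ⟨s, fun i ↦ hs i ▸ (f i).2, ?_⟩
  simpa only [hs, Function.comp_def] using Subtype.val_injective.comp f.injective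

section DigitLift

variable {ι : Type*} [Fintype ι]

/-- The set of indices whose exponent in `v` is at least `2`, i.e. the indices `k` such that `q k`
is a repeated factor of `∏ k, q k ^ v k`. -/
def repeatedIndices (v : ι → ℕ) : Finset ι := {k | 1 < v k}

theorem mem_repeatedIndices {v : ι → ℕ} {k : ι} : k ∈ repeatedIndices v ↔ 1 < v k :=
  Finset.mem_filter_univ k

/-- `a v` is a lift of the residue `s (repeatedIndices v)` modulo `∏ k, q k` to a residue modulo
`∏ k, q k ^ v k` for every exponent vector `v`, the leading digit in base `q k` being perturbed
when `v k ≥ 2`. When `v k = 1` the exponent `max 1 (v k - 1)` makes the perturbation vanish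
modulo `q k`. -/
def IsDigitLift (q : ι → ℕ) (s : Finset ι → ℤ) (a : (ι → ℕ) → ℤ) : Prop :=
  ∀ v k, a v ≡ s (repeatedIndices v) + (q k : ℤ) ^ max 1 (v k - 1) [ZMOD (q k : ℤ) ^ v k]

variable {q : ι → ℕ} {s : Finset ι → ℤ} {a : (ι → ℕ) → ℤ} {v w : ι → ℕ}

theorem exists_isDigitLift (hq : Pairwise (Nat.Coprime on q)) (s : Finset ι → ℤ) :
    ∃ a, IsDigitLift q s a := by
  have hlift (v : ι → ℕ) := exists_forall_modEq_of_pairwise_coprime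
    (m := fun k ↦ q k ^ v k) (fun _ _ hij ↦ (hq hij).pow _ _)
    fun k ↦ s (repeatedIndices v) + (q k : ℤ) ^ max 1 (v k - 1)
  choose a ha using hlift
  exact ⟨a, fun v k ↦ mod_cast ha v k⟩

theorem IsDigitLift.modEq_prod (ha : IsDigitLift q s a) (hq : Pairwise (Nat.Coprime on q))
    (hv : ∀ k, 1 ≤ v k) : a v ≡ s (repeatedIndices v) [ZMOD (∏ k, q k : ℕ)] := by
  refine modEq_prod_of_pairwise_coprime hq fun k ↦ ?_
  have hdigit : (q k : ℤ) ∣ (q k : ℤ) ^ max 1 (v k - 1) := dvd_pow_self _ (by lia)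
  have hbase : (q k : ℤ) ∣ (q k : ℤ) ^ v k :=
    dvd_pow_self _ (Nat.one_le_iff_ne_zero.mp (hv k))
  exact ((ha v k).of_dvd hbase).trans (Int.add_modEq_left_iff.mpr hdigit)

theorem IsDigitLift.not_overlap_of_lt (ha : IsDigitLift q s a) {k : ι} (hqk : 1 < q k)
    (hvw : repeatedIndices v = repeatedIndices w) (hv : 1 ≤ v k) (hlt : v k < w k) :
    ¬Overlap (a v, ∏ k, q k ^ v k) (a w, ∏ k, q k ^ w k) := by
  intro hoverlap
  have hrep : 1 < v k :=
    mem_repeatedIndices.mp (hvw ▸ mem_repeatedIndices.mpr (hv.trans_lt hlt))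
  have hpow : q k ^ v k ∣ q k ^ w k := pow_dvd_pow _ hlt.le
  have hmodEq : a v ≡ a w [ZMOD (q k : ℤ) ^ v k] := mod_cast hoverlap.modEq_of_dvd
    (Finset.dvd_prod_of_mem (fun k ↦ q k ^ v k) (Finset.mem_univ k))
    (hpow.trans (Finset.dvd_prod_of_mem (fun k ↦ q k ^ w k) (Finset.mem_univ k)))
  have hsum := (ha v k).symm.trans (hmodEq.trans ((ha w k).of_dvd (mod_cast hpow)))
  rw [hvw] at hsum
  have hdigits :
      (q k : ℤ) ^ (v k - 1) ≡ (q k : ℤ) ^ (w k - 1) [ZMOD (q k : ℤ) ^ (v k - 1 + 1)] := by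
    simpa only [max_eq_right (show 1 ≤ v k - 1 by lia), max_eq_right (show 1 ≤ w k - 1 by lia),
      Nat.sub_add_cancel hv] using hsum.add_left_cancel' _
  refine pow_not_modEq_pow_of_lt ?_ ?_ (Nat.sub_lt_sub_right hv hlt) hdigits
  · exact mod_cast (zero_lt_one.trans hqk).ne'
  · rw [Int.isUnit_iff]
    lia

theorem IsDigitLift.repeatedIndices_eq_of_overlap (ha : IsDigitLift q s a)
    (hq : Pairwise (Nat.Coprime on q))
    (hs : Function.Injective fun U ↦ (s U : ZMod (∏ k, q k)))
    (hv : ∀ k, 1 ≤ v k) (hw : ∀ k, 1 ≤ w k)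
    (hoverlap : Overlap (a v, ∏ k, q k ^ v k) (a w, ∏ k, q k ^ w k)) :
    repeatedIndices v = repeatedIndices w := by
  have hdvd {u : ι → ℕ} (hu : ∀ k, 1 ≤ u k) : ∏ k, q k ∣ ∏ k, q k ^ u k :=
    Finset.prod_dvd_prod_of_dvd _ _ fun k _ ↦ dvd_pow_self _ (Nat.one_le_iff_ne_zero.mp (hu k))
  refine hs ((ZMod.intCast_eq_intCast_iff _ _ _).mpr ?_)
  calc s (repeatedIndices v)
    _ ≡ a v [ZMOD (∏ k, q k : ℕ)] := (ha.modEq_prod hq hv).symm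
    _ ≡ a w [ZMOD (∏ k, q k : ℕ)] := hoverlap.modEq_of_dvd (hdvd hv) (hdvd hw)
    _ ≡ s (repeatedIndices w) [ZMOD (∏ k, q k : ℕ)] := ha.modEq_prod hq hw

theorem IsDigitLift.eq_of_overlap (ha : IsDigitLift q s a) (hq₁ : ∀ k, 1 < q k)
    (hq : Pairwise (Nat.Coprime on q))
    (hs : Function.Injective fun U ↦ (s U : ZMod (∏ k, q k)))
    (hv : ∀ k, 1 ≤ v k) (hw : ∀ k, 1 ≤ w k)
    (hoverlap : Overlap (a v, ∏ k, q k ^ v k) (a w, ∏ k, q k ^ w k)) : v = w := by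
  have hvw := ha.repeatedIndices_eq_of_overlap hq hs hv hw hoverlap
  by_contra hne
  obtain ⟨k, hk⟩ := Function.ne_iff.mp hne
  rcases hk.lt_or_gt with hlt | hgt
  · exact ha.not_overlap_of_lt (hq₁ k) hvw (hv k) hlt hoverlap
  · exact ha.not_overlap_of_lt (hq₁ k) hvw.symm (hw k) hgt hoverlap.symm

end DigitLift

theorem manyFactor_good_general {ι : Type*} [Fintype ι] (q : ι → ℕ) (hq₁ : ∀ k, 1 < q k)
    (hq : Pairwise (Nat.Coprime on q)) (S : Finset (ZMod (∏ k, q k)))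
    (hS : 2 ^ Fintype.card ι ≤ S.card) :
    ∃ a : (ι → ℕ) → ℤ,
      IsGood {x : ℤ × ℕ | ∃ v : ι → ℕ, (∀ k, 1 ≤ v k) ∧ x = (a v, ∏ k, q k ^ v k)} ∧
      ∀ v : ι → ℕ, (∀ k, 1 ≤ v k) → (a v : ZMod (∏ k, q k)) ∈ S := by
  obtain ⟨s, hsS, hs⟩ := exists_intCast_mem_and_injective (ι := Finset ι) S
    (by rwa [Fintype.card_finset])
  obtain ⟨a, ha⟩ := exists_isDigitLift hq s
  refine ⟨a, ?_, fun v hv ↦ ?_⟩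
  · rintro _ ⟨v, hv, rfl⟩ _ ⟨w, hw, rfl⟩ hne hoverlap
    obtain rfl := ha.eq_of_overlap hq₁ hq hs hv hw hoverlap
    exact absurd rfl hne
  · rw [(ZMod.intCast_eq_intCast_iff _ _ _).mpr (ha.modEq_prod hq hv)]
    exact hsS _

theorem manyFactor_good (t : ℕ) (ht : 3 ≤ t) (p : Fin t → ℕ)
    (hp : ∀ k, (p k).Prime) (hodd : ∀ k, Odd (p k)) (hmono : StrictMono p)
    (α : Fin t → ℕ) (hα : ∀ k, 1 ≤ α k)
    (S : Finset (ZMod (∏ k, p k))) (hS : 2 ^ t ≤ S.card) :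
    ∃ a : (Fin t → ℕ) → ℤ,
      IsGood {x : ℤ × ℕ | ∃ v : Fin t → ℕ, (∀ k, 1 ≤ v k ∧ v k ≤ α k) ∧
        x = (a v, ∏ k, p k ^ v k)} ∧
      ∀ v : Fin t → ℕ, (∀ k, 1 ≤ v k ∧ v k ≤ α k) →
        ((a v : ZMod (∏ k, p k)) ∈ S) := by
  obtain ⟨a, hgood, hmem⟩ := manyFactor_good_general p (fun k ↦ (hp k).one_lt)
    (fun _ _ hij ↦ (Nat.coprime_primes (hp _) (hp _)).mpr (hmono.injective.ne hij)) S (by simpa)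
  exact ⟨a, hgood.mono fun _ ⟨v, hv, hx⟩ ↦ ⟨v, fun k ↦ (hv k).1, hx⟩,
    fun v hv ↦ hmem v fun k ↦ (hv k).1⟩
end

section
/- The integer n = 5^2 · 7^2 · 11^2 · 13^2 = 25050025 is nice. -/
/-!
Each prime factor `p` of `d` is sent to its successor in a fixed cyclic order of the prime factors
of `d`, and `a_d` is chosen so that its lowest nonzero base-`p` digit names that successor and
stands in the highest position visible modulo the `p`-part of `d`. If `a_d (mod d)` and
`a_e (mod e)` overlap, then at each common prime `p` the digits agree, position included: `d` and
`e` have the same exponent of `p`, and the two cyclic orders give `p` the same successor. The set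
of common primes is therefore closed under both cyclic orders, so, being nonempty when `d` and `e`
are not coprime, it is the whole of each, and `d = e`. There are enough nonzero digits to name every
prime factor of `n` because each prime exceeds their number: here, four primes, the least being 5.
-/

theorem Overlap.modEq_of_dvd_s16 {c₁ c₂ : ℤ × ℕ} (h : Overlap c₁ c₂) {m : ℕ}
    (h₁ : m ∣ c₁.2) (h₂ : m ∣ c₂.2) : c₁.1 ≡ c₂.1 [ZMOD m] := by
  obtain ⟨x, hx₁, hx₂⟩ := h
  exact (hx₁.of_dvd (Int.natCast_dvd_natCast.2 h₁)).symm.trans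
    (hx₂.of_dvd (Int.natCast_dvd_natCast.2 h₂))

theorem exists_modEq_pow_factorization (d : ℕ) (r : ℕ → ℕ) :
    ∃ a : ℕ, ∀ p ∈ d.primeFactors, a ≡ r p [MOD p ^ d.factorization p] := by
  have hne : ∀ p ∈ d.primeFactors, p ^ d.factorization p ≠ 0 := fun p hp =>
    pow_ne_zero _ (Nat.prime_of_mem_primeFactors hp).ne_zero
  have hcoprime : Set.Pairwise (d.primeFactors : Set ℕ)
      (Function.onFun Nat.Coprime fun p => p ^ d.factorization p) := fun p hp q hq hpq =>
    Nat.coprime_pow_primes _ _ (Nat.prime_of_mem_primeFactors hp)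
      (Nat.prime_of_mem_primeFactors hq) hpq
  exact ⟨_, (Nat.chineseRemainderOfFinset r _ _ hne hcoprime).2⟩

-- `r d p` prescribes the residue `a_d` modulo the `p`-part of `d`.
theorem isNice_of_modEq_imp_eq {n : ℕ} (r : ℕ → ℕ → ℕ)
    (hr : ∀ d e, d ∣ n → e ∣ n → ¬ d.Coprime e →
      (∀ p ∈ d.primeFactors ∩ e.primeFactors,
        r d p ≡ r e p [MOD p ^ min (d.factorization p) (e.factorization p)]) → d = e) :
    IsNice n := by
  choose a ha using fun d => exists_modEq_pow_factorization d (r d)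
  refine ⟨fun d => a d, ?_⟩
  rintro _ ⟨d, hd, -, rfl⟩ _ ⟨e, he, -, rfl⟩ hne hoverlap
  by_contra hde
  refine hne (congrArg (fun d => ((a d : ℤ), d)) (hr d e hd he hde fun p hp => ?_))
  obtain ⟨hpd, hpe⟩ := Finset.mem_inter.1 hp
  have hmin_d := pow_dvd_pow p (min_le_left (d.factorization p) (e.factorization p))
  have hmin_e := pow_dvd_pow p (min_le_right (d.factorization p) (e.factorization p))
  have hagree := Int.natCast_modEq_iff.1 <| hoverlap.modEq_of_dvd_s16
    (hmin_d.trans (Nat.ordProj_dvd d p)) (hmin_e.trans (Nat.ordProj_dvd e p))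
  exact ((ha d p hpd).of_dvd hmin_d).symm.trans (hagree.trans ((ha e p hpe).of_dvd hmin_e))

theorem eq_of_digit_mul_pow_modEq {p i j r s : ℕ} (hr : r ∈ Set.Ioo 0 p) (hs : s ∈ Set.Ioo 0 p)
    (h : r * p ^ i ≡ s * p ^ j [MOD p ^ (min i j + 1)]) : i = j ∧ r = s := by
  wlog hij : i ≤ j generalizing i j r s
  · obtain ⟨hji, hsr⟩ := this hs hr (min_comm i j ▸ h.symm) (le_of_not_ge hij)
    exact ⟨hji.symm, hsr.symm⟩
  obtain ⟨k, rfl⟩ := Nat.exists_eq_add_of_le hij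
  have hpow : p ^ i ≠ 0 := pow_ne_zero _ (hr.1.trans hr.2).ne'
  have hdigit : r ≡ s * p ^ k [MOD p] := by
    refine Nat.ModEq.mul_right_cancel' hpow ?_
    rwa [min_eq_left hij, pow_succ', pow_add, mul_left_comm, mul_comm (p ^ i)] at h
  rcases k.eq_zero_or_pos with rfl | hk
  · exact ⟨rfl, Nat.ModEq.eq_of_lt_of_lt (by simpa using hdigit) hr.2 hs.2⟩
  · have hpr : p ∣ r := (hdigit.dvd_iff dvd_rfl).2 ((dvd_pow_self p hk.ne').mul_left s)
    exact absurd (Nat.le_of_dvd hr.1 hpr) hr.2.not_ge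

theorem subset_of_isCycleOn_of_eqOn_inter {α : Type*} {f g : Equiv.Perm α} {s t : Set α}
    (hf : f.IsCycleOn s) (hs : s.Finite) (hg : Set.MapsTo g t t) (hfg : Set.EqOn f g (s ∩ t))
    (hst : (s ∩ t).Nonempty) : s ⊆ t := by
  obtain ⟨x, hx⟩ := hst
  have hmaps : Set.MapsTo f (s ∩ t) (s ∩ t) := fun y hy =>
    ⟨hf.1.mapsTo hy.1, hfg hy ▸ hg hy.2⟩
  intro y hy
  obtain ⟨m, -, rfl⟩ := hf.exists_pow_eq' hs hx.1 hy
  rw [← Equiv.Perm.iterate_eq_pow]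
  exact (hmaps.iterate m hx).2

theorem eq_of_isCycleOn_of_eqOn_inter {α : Type*} {f g : Equiv.Perm α} {s t : Set α}
    (hf : f.IsCycleOn s) (hs : s.Finite) (hg : g.IsCycleOn t) (ht : t.Finite)
    (hfg : Set.EqOn f g (s ∩ t)) (hst : (s ∩ t).Nonempty) : s = t :=
  (subset_of_isCycleOn_of_eqOn_inter hf hs hg.1.mapsTo hfg hst).antisymm <|
    subset_of_isCycleOn_of_eqOn_inter hg ht hf.1.mapsTo
      (Set.inter_comm s t ▸ hfg.symm) (Set.inter_comm s t ▸ hst)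

theorem exists_injOn_mapsTo_Ioc {α : Type*} (s : Finset α) :
    ∃ c : α → ℕ, Set.MapsTo c s (Set.Ioc 0 s.card) ∧ Set.InjOn c s :=
  s.finite_toSet.exists_injOn_of_encard_le (t := Set.Ioc 0 s.card) <| by
    rw [← Finset.coe_Ioc, Set.encard_coe_eq_coe_finsetCard, Set.encard_coe_eq_coe_finsetCard,
      Nat.card_Ioc, Nat.sub_zero]

theorem eq_of_factorization_eq_of_cycle_eq {σ : Finset ℕ → Equiv.Perm ℕ}
    (hσ : ∀ s, (σ s).IsCycleOn s) {d e : ℕ} (hd : d ≠ 0) (he : e ≠ 0) (hde : ¬ d.Coprime e)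
    (h : ∀ p ∈ d.primeFactors ∩ e.primeFactors,
      d.factorization p = e.factorization p ∧ σ d.primeFactors p = σ e.primeFactors p) :
    d = e := by
  have hne : ((d.primeFactors : Set ℕ) ∩ e.primeFactors).Nonempty := by
    obtain ⟨p, hp, hpd, hpe⟩ := Nat.Prime.not_coprime_iff_dvd.1 hde
    exact ⟨p, hp.mem_primeFactors hpd hd, hp.mem_primeFactors hpe he⟩
  have hprimes : d.primeFactors = e.primeFactors := Finset.coe_injective <|
    eq_of_isCycleOn_of_eqOn_inter (hσ _) (Finset.finite_toSet _) (hσ _) (Finset.finite_toSet _)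
      (fun p hp => (h p (Finset.mem_inter.2 hp)).2) hne
  refine Nat.eq_of_factorization_eq' hd he (Finsupp.ext_iff'.2 ⟨hprimes, fun p hp => ?_⟩)
  exact (h p (Finset.mem_inter.2 ⟨hp, hprimes ▸ hp⟩)).1

theorem nice_25050025_general {n : ℕ} (hn : n ≠ 0)
    (h : ∀ p ∈ n.primeFactors, n.primeFactors.card < p) : IsNice n := by
  obtain ⟨c, hc, hc_inj⟩ := exists_injOn_mapsTo_Ioc n.primeFactors
  choose σ hσ _ using fun s : Finset ℕ => s.countable_toSet.exists_cycleOn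
  refine isNice_of_modEq_imp_eq
    (fun d p => c (σ d.primeFactors p) * p ^ (d.factorization p - 1)) ?_
  intro d e hd he hde hr
  have hsucc {d p} (hd : d ∣ n) (hp : p ∈ d.primeFactors) :
      σ d.primeFactors p ∈ n.primeFactors :=
    Nat.primeFactors_mono hd hn ((hσ d.primeFactors).1.mapsTo hp)
  have hdigit {d p} (hd : d ∣ n) (hp : p ∈ d.primeFactors) :
      c (σ d.primeFactors p) ∈ Set.Ioo 0 p :=
    ⟨(hc (hsucc hd hp)).1, (hc (hsucc hd hp)).2.trans_lt (h p (Nat.primeFactors_mono hd hn hp))⟩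
  have hexp {d p : ℕ} (hp : p ∈ d.primeFactors) : 0 < d.factorization p :=
    Nat.pos_of_ne_zero (Finsupp.mem_support_iff (f := d.factorization).1 hp)
  refine eq_of_factorization_eq_of_cycle_eq hσ (ne_zero_of_dvd_ne_zero hn hd)
    (ne_zero_of_dvd_ne_zero hn he) hde fun p hp => ?_
  obtain ⟨hpd, hpe⟩ := Finset.mem_inter.1 hp
  have hmin : min (d.factorization p) (e.factorization p) =
      min (d.factorization p - 1) (e.factorization p - 1) + 1 := by
    have := hexp hpd
    have := hexp hpe
    omega
  obtain ⟨hpred, hlabel⟩ :=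
    eq_of_digit_mul_pow_modEq (hdigit hd hpd) (hdigit he hpe) (hmin ▸ hr p hp)
  exact ⟨Nat.pred_inj (hexp hpd) (hexp hpe) hpred, hc_inj (hsucc hd hpd) (hsucc he hpe) hlabel⟩

theorem nice_25050025 : IsNice 25050025 := by
  have hfactors : Nat.primeFactors 25050025 = {5, 7, 11, 13} := by
    simp [Nat.primeFactors]
  exact nice_25050025_general (by norm_num) (by simp [hfactors])
end
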